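/- arXiv:1912.13515 — 2 statements merged into one kernel-verified Lean document; each statement's English description precedes it below -/
import Mathlib

section
/- Let Φ : ℝ^d → ℝ be differentiable with L_Φ-Lipschitz gradient, bounded below by Φ*, let S_o > 0, let q ≥ 1 be an integer, let ε > 0, set η = 1/max(√(6 S_o q), 2 L_Φ), and let x_0, F_0, …, F_{T−1} ∈ ℝ^d define iterates x_{t+1} = x_t − η F_t. Suppose that for every t with 0 ≤ t ≤ T−1, ‖F_t − ∇Φ(x_t)‖² ≤ 3 S_o η² Σ_{s = ⌊t/q⌋·q}^{t−1} ‖F_s‖², and that T ≥ (2 (Φ(x_0) − Φ*)/ε²) · max(√(6 S_o q), 2 L_Φ). Then (1/T) Σ_{t=0}^{T−1} ‖∇Φ(x_t)‖² ≤ ε², and in particular there exists t < T with ‖∇Φ(x_t)‖ ≤ ε. -/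
open scoped BigOperators

/-!
With `g = ∇Φ x`, the identity `-2⟪g, F⟫ = ‖F - g‖² - ‖F‖² - ‖g‖²` turns the quadratic upper bound
for `Φ` along a step `x ↦ x - η F` into a decrease of `Φ` by
`(η / 2) (‖g‖² + (1 - L η) ‖F‖² - ‖F - g‖²)`. After summation over `t`, each `‖F_s‖²` enters the
error bounds at most `q` times, so the total error is at most `3 S_o η² q ∑ ‖F_s‖²`. The stepsize
makes both `L η` and `3 S_o η² q` at most `1/2`, so the terms `‖F_s‖²` absorb the error and
`η ∑ ‖∇Φ x_t‖² ≤ 2 (Φ x₀ - Φ x_T)` is left.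
-/

open Finset

section QuadraticBound

variable {E F : Type*} [NormedAddCommGroup E] [NormedSpace ℝ E]
  [NormedAddCommGroup F] [NormedSpace ℝ F]

lemma norm_image_sub_sub_le_of_norm_hasFDerivAt_sub_le {f : E → F} {f' : E → E →L[ℝ] F}
    {L : ℝ} {x y : E} (hf : ∀ z ∈ segment ℝ x y, HasFDerivAt f (f' z) z)
    (hlip : ∀ z ∈ segment ℝ x y, ‖f' z - f' x‖ ≤ L * ‖z - x‖) :
    ‖f y - f x - f' x (y - x)‖ ≤ L / 2 * ‖y - x‖ ^ 2 := by
  let c : ℝ → E := AffineMap.lineMap x y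
  have hc {t : ℝ} (ht : t ∈ Set.Icc 0 1) : c t ∈ segment ℝ x y := lineMap_mem_segment ℝ x y ht
  have hc_sub (t : ℝ) : c t - x = t • (y - x) := by simp [c, AffineMap.lineMap_apply]
  let r : ℝ → F := fun t ↦ f (c t) - f x - t • f' x (y - x)
  have hr {t : ℝ} (ht : t ∈ Set.Icc 0 1) : HasDerivAt r ((f' (c t) - f' x) (y - x)) t := by
    have hfc := (hf (c t) (hc ht)).comp_hasDerivAt t AffineMap.hasDerivAt_lineMap
    simpa [r] using (hfc.sub_const (f x)).fun_sub ((hasDerivAt_id t).smul_const (f' x (y - x)))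
  have hB (t : ℝ) : HasDerivAt (fun t ↦ L / 2 * ‖y - x‖ ^ 2 * t ^ 2) (L * ‖y - x‖ ^ 2 * t) t := by
    refine ((hasDerivAt_pow 2 t).const_mul (L / 2 * ‖y - x‖ ^ 2)).congr_deriv ?_
    norm_num
    ring
  have hr_deriv_le : ∀ t ∈ Set.Ico (0 : ℝ) 1,
      ‖(f' (c t) - f' x) (y - x)‖ ≤ L * ‖y - x‖ ^ 2 * t := fun t ht ↦
    calc ‖(f' (c t) - f' x) (y - x)‖
      _ ≤ ‖f' (c t) - f' x‖ * ‖y - x‖ := ContinuousLinearMap.le_opNorm _ _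
      _ ≤ L * ‖c t - x‖ * ‖y - x‖ := by gcongr; exact hlip _ (hc ⟨ht.1, ht.2.le⟩)
      _ = L * ‖y - x‖ ^ 2 * t := by
        rw [hc_sub, norm_smul, Real.norm_of_nonneg ht.1]
        ring
  have hr_le := image_norm_le_of_norm_deriv_right_le_deriv_boundary
    (fun t ht ↦ (hr ht).continuousAt.continuousWithinAt)
    (fun t ht ↦ (hr ⟨ht.1, ht.2.le⟩).hasDerivWithinAt) (by simp [r, c]) hB hr_deriv_le
    (Set.right_mem_Icc.2 zero_le_one)
  simpa [r, c] using hr_le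

end QuadraticBound

section InexactGradientDescent

variable {E : Type*} [NormedAddCommGroup E] [InnerProductSpace ℝ E] [CompleteSpace E]
  {Φ : E → ℝ} {L : ℝ}

lemma le_add_inner_gradient_add_sq (hΦ : Differentiable ℝ Φ)
    (hlip : ∀ x x', ‖gradient Φ x - gradient Φ x'‖ ≤ L * ‖x - x'‖) (x y : E) :
    Φ y ≤ Φ x + inner ℝ (gradient Φ x) (y - x) + L / 2 * ‖y - x‖ ^ 2 := by
  have hfderiv_lip (z : E) : ‖fderiv ℝ Φ z - fderiv ℝ Φ x‖ ≤ L * ‖z - x‖ := by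
    rw [← toDual_gradient, ← toDual_gradient, ← map_sub, LinearIsometryEquiv.norm_map]
    exact hlip z x
  have hquad := norm_image_sub_sub_le_of_norm_hasFDerivAt_sub_le (y := y)
    (fun z _ ↦ (hΦ z).hasFDerivAt) (fun z _ ↦ hfderiv_lip z)
  rw [← inner_gradient_left] at hquad
  linarith [(Real.le_norm_self _).trans hquad]

lemma apply_sub_smul_le_of_lipschitz_gradient (hΦ : Differentiable ℝ Φ)
    (hlip : ∀ x x', ‖gradient Φ x - gradient Φ x'‖ ≤ L * ‖x - x'‖) (η : ℝ) (x v : E) :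
    Φ (x - η • v) ≤ Φ x
      - η / 2 * (‖gradient Φ x‖ ^ 2 + (1 - L * η) * ‖v‖ ^ 2 - ‖v - gradient Φ x‖ ^ 2) := by
  have hdescent := le_add_inner_gradient_add_sq hΦ hlip x (x - η • v)
  have hpolar := norm_sub_sq_real v (gradient Φ x)
  rw [sub_sub_cancel_left, inner_neg_right, inner_smul_right, norm_neg, norm_smul, mul_pow,
    Real.norm_eq_abs, sq_abs] at hdescent
  rw [real_inner_comm] at hpolar
  rw [hpolar]
  linarith

variable {η : ℝ} {x F : ℕ → E} {T : ℕ}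

lemma mul_sum_sq_norm_gradient_le (hΦ : Differentiable ℝ Φ)
    (hlip : ∀ x x', ‖gradient Φ x - gradient Φ x'‖ ≤ L * ‖x - x'‖)
    (hupd : ∀ t < T, x (t + 1) = x t - η • F t) :
    η * ∑ t ∈ range T, ‖gradient Φ (x t)‖ ^ 2 ≤ 2 * (Φ (x 0) - Φ (x T))
      + η * (∑ t ∈ range T, ‖F t - gradient Φ (x t)‖ ^ 2
        - (1 - L * η) * ∑ t ∈ range T, ‖F t‖ ^ 2) := by
  have hstep : ∀ t ∈ range T, η * ‖gradient Φ (x t)‖ ^ 2 ≤ 2 * (Φ (x t) - Φ (x (t + 1)))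
      + η * (‖F t - gradient Φ (x t)‖ ^ 2 - (1 - L * η) * ‖F t‖ ^ 2) := fun t ht ↦ by
    have hdescent := apply_sub_smul_le_of_lipschitz_gradient hΦ hlip η (x t) (F t)
    rw [← hupd t (mem_range.1 ht)] at hdescent
    linarith
  have hsum := sum_le_sum hstep
  rwa [sum_add_distrib, ← mul_sum, ← mul_sum, ← mul_sum, sum_range_sub', sum_sub_distrib,
    ← mul_sum] at hsum

end InexactGradientDescent

lemma sum_sum_Ico_le_nsmul_sum {M : Type*} [AddCommMonoid M] [PartialOrder M]
    [IsOrderedAddMonoid M] {a : ℕ → M} {start : ℕ → ℕ} {q T : ℕ}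
    (ha : ∀ s < T, 0 ≤ a s) (hstart : ∀ t < T, t ≤ start t + q) :
    ∑ t ∈ range T, ∑ s ∈ Ico (start t) t, a s ≤ q • ∑ s ∈ range T, a s := by
  let windowsContaining (s : ℕ) : Finset ℕ := {t ∈ range T | start t ≤ s ∧ s < t}
  have hcard (s : ℕ) : #(windowsContaining s) ≤ q := by
    have hsub : windowsContaining s ⊆ Ioc s (s + q) := fun t ht ↦ by
      simp only [windowsContaining, mem_filter, mem_range, mem_Ioc] at ht ⊢
      have := hstart t ht.1
      omega
    simpa using card_le_card hsub
  calc ∑ t ∈ range T, ∑ s ∈ Ico (start t) t, a s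
    _ = ∑ s ∈ range T, ∑ _t ∈ windowsContaining s, a s := sum_comm' fun t s ↦ by
      simp only [windowsContaining, mem_filter, mem_range, mem_Ico]
      omega
    _ = ∑ s ∈ range T, #(windowsContaining s) • a s := by simp only [sum_const]
    _ ≤ ∑ s ∈ range T, q • a s :=
      sum_le_sum fun s hs ↦ nsmul_le_nsmul_left (ha s (mem_range.1 hs)) (hcard s)
    _ = q • ∑ s ∈ range T, a s := sum_nsmul _ _ _

section EpochwiseError

variable {E : Type*} [NormedAddCommGroup E] [InnerProductSpace ℝ E] [CompleteSpace E]
  {Φ : E → ℝ} {L η Φstar So ε : ℝ} {x F : ℕ → E} {epochStart : ℕ → ℕ} {q T : ℕ}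

lemma mul_sum_sq_norm_gradient_le_of_epochwise_error {c : ℝ} (hη : 0 ≤ η) (hc : 0 ≤ c)
    (hcη : c * q + L * η ≤ 1) (hΦ : Differentiable ℝ Φ)
    (hlip : ∀ x x', ‖gradient Φ x - gradient Φ x'‖ ≤ L * ‖x - x'‖)
    (hupd : ∀ t < T, x (t + 1) = x t - η • F t)
    (hepoch : ∀ t < T, t ≤ epochStart t + q)
    (herr : ∀ t < T, ‖F t - gradient Φ (x t)‖ ^ 2 ≤ c * ∑ s ∈ Ico (epochStart t) t, ‖F s‖ ^ 2) :
    η * ∑ t ∈ range T, ‖gradient Φ (x t)‖ ^ 2 ≤ 2 * (Φ (x 0) - Φ (x T)) := by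
  have herr_sum : ∑ t ∈ range T, ‖F t - gradient Φ (x t)‖ ^ 2
      ≤ (1 - L * η) * ∑ t ∈ range T, ‖F t‖ ^ 2 :=
    calc ∑ t ∈ range T, ‖F t - gradient Φ (x t)‖ ^ 2
      _ ≤ ∑ t ∈ range T, c * ∑ s ∈ Ico (epochStart t) t, ‖F s‖ ^ 2 :=
        sum_le_sum fun t ht ↦ herr t (mem_range.1 ht)
      _ = c * ∑ t ∈ range T, ∑ s ∈ Ico (epochStart t) t, ‖F s‖ ^ 2 := (mul_sum ..).symm
      _ ≤ c * (q • ∑ t ∈ range T, ‖F t‖ ^ 2) := by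
        gcongr
        exact sum_sum_Ico_le_nsmul_sum (fun s _ ↦ sq_nonneg ‖F s‖) hepoch
      _ = c * q * ∑ t ∈ range T, ‖F t‖ ^ 2 := by rw [nsmul_eq_mul, mul_assoc]
      _ ≤ (1 - L * η) * ∑ t ∈ range T, ‖F t‖ ^ 2 := by gcongr; linarith
  have hslack := mul_nonpos_of_nonneg_of_nonpos hη (sub_nonpos.2 herr_sum)
  linarith [mul_sum_sq_norm_gradient_le hΦ hlip hupd]

lemma three_mul_stepsize_sq_add_lipschitz_mul_stepsize_le_one {M : ℝ} (hM : 0 < M)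
    (hsqrt : √(6 * So * q) ≤ M) (hL : 2 * L ≤ M) :
    3 * So * (1 / M) ^ 2 * q + L * (1 / M) ≤ 1 := by
  have hSo : 3 * So * (1 / M) ^ 2 * q ≤ 1 / 2 := by
    have hsq : 6 * So * q ≤ M ^ 2 := (Real.sqrt_le_left hM.le).1 hsqrt
    rw [show 3 * So * (1 / M) ^ 2 * q = 6 * So * q / M ^ 2 / 2 by ring]
    gcongr
    exact div_le_one_of_le₀ hsq (sq_nonneg M)
  have hLM : L * (1 / M) ≤ 1 / 2 := by
    rw [mul_one_div, div_le_iff₀ hM]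
    linarith
  linarith

theorem sarah_compositional_finite_sum_convergence_general (hT : 1 ≤ T) (hSo : 0 ≤ So)
    (hM : 0 < max (√(6 * So * q)) (2 * L)) (hε : 0 < ε)
    (hη : η = 1 / max (√(6 * So * q)) (2 * L)) (hΦ : Differentiable ℝ Φ)
    (hlip : ∀ x x', ‖gradient Φ x - gradient Φ x'‖ ≤ L * ‖x - x'‖)
    (hbound : ∀ x, Φstar ≤ Φ x)
    (hupd : ∀ t < T, x (t + 1) = x t - η • F t)
    (hepoch : ∀ t < T, t ≤ epochStart t + q)
    (herr : ∀ t < T, ‖F t - gradient Φ (x t)‖ ^ 2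
      ≤ 3 * So * η ^ 2 * ∑ s ∈ Ico (epochStart t) t, ‖F s‖ ^ 2)
    (hTlarge : 2 * (Φ (x 0) - Φstar) / ε ^ 2 * max (√(6 * So * q)) (2 * L) ≤ T) :
    (1 / T : ℝ) * ∑ t ∈ range T, ‖gradient Φ (x t)‖ ^ 2 ≤ ε ^ 2 ∧
    ∃ t < T, ‖gradient Φ (x t)‖ ≤ ε := by
  set M := max (√(6 * So * q)) (2 * L)
  have hbudget : 3 * So * η ^ 2 * q + L * η ≤ 1 := hη ▸
    three_mul_stepsize_sq_add_lipschitz_mul_stepsize_le_one hM (le_max_left ..) (le_max_right ..)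
  have hη_nonneg : 0 ≤ η := hη ▸ one_div_nonneg.2 hM.le
  have hdecrease : η * ∑ t ∈ range T, ‖gradient Φ (x t)‖ ^ 2 ≤ 2 * (Φ (x 0) - Φ (x T)) :=
    mul_sum_sq_norm_gradient_le_of_epochwise_error hη_nonneg (by positivity) hbudget hΦ hlip hupd
      hepoch herr
  have hsum : ∑ t ∈ range T, ‖gradient Φ (x t)‖ ^ 2 ≤ T * ε ^ 2 :=
    calc ∑ t ∈ range T, ‖gradient Φ (x t)‖ ^ 2
      _ = η * (∑ t ∈ range T, ‖gradient Φ (x t)‖ ^ 2) * M := by rw [hη]; field_simp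
      _ ≤ 2 * (Φ (x 0) - Φ (x T)) * M := by gcongr
      _ ≤ 2 * (Φ (x 0) - Φstar) * M := by gcongr; exact hbound (x T)
      _ = 2 * (Φ (x 0) - Φstar) / ε ^ 2 * M * ε ^ 2 := by field_simp
      _ ≤ T * ε ^ 2 := by gcongr
  have hT_pos : (0 : ℝ) < T := by exact_mod_cast hT
  refine ⟨by rwa [one_div, inv_mul_le_iff₀ hT_pos], ?_⟩
  obtain ⟨t, ht, hle⟩ : ∃ t ∈ range T, ‖gradient Φ (x t)‖ ^ 2 ≤ ε ^ 2 :=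
    exists_le_of_sum_le (nonempty_range_iff.2 (by omega)) (by simpa using hsum)
  exact ⟨t, mem_range.1 ht, (sq_le_sq₀ (norm_nonneg _) hε.le).1 hle⟩

end EpochwiseError

/-- Finite-sum convergence theorem (deterministic per-trajectory form): with the stepsize
`η = 1/max(√(6 S_o q), 2 L_Φ)` and `T ≥ (2(Φ(x_0) − Φ*)/ε²)·max(√(6 S_o q), 2 L_Φ)`,
the average squared gradient norm is at most `ε²`, so some iterate is `ε`-accurate. -/
theorem sarah_compositional_finite_sum_convergence
    (d : ℕ) (LΦ η Φstar So ε : ℝ) (q T : ℕ) (hq : 1 ≤ q) (hT : 1 ≤ T)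
    (hLΦ : 0 ≤ LΦ) (hSo : 0 < So) (hε : 0 < ε)
    (hη : η = 1 / max (Real.sqrt (6 * So * (q : ℝ))) (2 * LΦ))
    (Φ : EuclideanSpace ℝ (Fin d) → ℝ) (hΦ : Differentiable ℝ Φ)
    (hlip : ∀ x x', ‖gradient Φ x - gradient Φ x'‖ ≤ LΦ * ‖x - x'‖)
    (hbound : ∀ x, Φstar ≤ Φ x)
    (x F : ℕ → EuclideanSpace ℝ (Fin d))
    (hupd : ∀ t < T, x (t + 1) = x t - η • F t)
    (herr : ∀ t < T, ‖F t - gradient Φ (x t)‖ ^ 2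
        ≤ 3 * So * η ^ 2 * ∑ s ∈ Finset.Ico (t / q * q) t, ‖F s‖ ^ 2)
    (hTlarge : 2 * (Φ (x 0) - Φstar) / ε ^ 2
        * max (Real.sqrt (6 * So * (q : ℝ))) (2 * LΦ) ≤ (T : ℝ)) :
    (1 / (T : ℝ)) * ∑ t ∈ Finset.range T, ‖gradient Φ (x t)‖ ^ 2 ≤ ε ^ 2 ∧
    ∃ t < T, ‖gradient Φ (x t)‖ ≤ ε := by
  have hM : 0 < max (√(6 * So * q)) (2 * LΦ) := lt_max_of_lt_left (by positivity)
  exact sarah_compositional_finite_sum_convergence_general hT hSo.le hM hε hη hΦ hlip hbound hupd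
    (fun t _ ↦ (Nat.lt_div_mul_add hq).le) herr hTlarge
end

section
/- Let Φ : ℝ^d → ℝ be differentiable with L_Φ-Lipschitz gradient, bounded below by Φ*, let S_o > 0, ω ≥ 0 with ω ≤ ε² for some ε > 0, let q ≥ 1 be an integer, set η = 1/max(√(6 S_o q), 2 L_Φ), and let x_0, F_0, …, F_{T−1} ∈ ℝ^d define iterates x_{t+1} = x_t − η F_t. Suppose that for every t with 0 ≤ t ≤ T−1, ‖F_t − ∇Φ(x_t)‖² ≤ ω + 3 S_o η² Σ_{s = ⌊t/q⌋·q}^{t−1} ‖F_s‖², and that T ≥ (2 (Φ(x_0) − Φ*)/ε²) · max(√(6 S_o q), 2 L_Φ). Then (1/T) Σ_{t=0}^{T−1} ‖∇Φ(x_t)‖² ≤ 2 ε². -/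
open scoped BigOperators

/-!
With an inexact gradient `v`, a step of length `η` on an `L`-smooth function satisfies
`(η / 2) ‖∇Φ‖² + (η / 2) (1 - Lη) ‖v‖² ≤ decrease of Φ + (η / 2) ‖v - ∇Φ‖²`. Summing along the
trajectory telescopes the decrease. The estimation errors are sums of `‖F s‖²` over windows of
length at most `q`, so each `‖F s‖²` is counted at most `q` times, and the total is absorbed by the
`‖v‖²` terms as soon as `c * q + L * η ≤ 1`, where `c = 3 * So * η ^ 2`. The prescribed step size
makes each of the two summands at most `1 / 2`.
-/

open scoped Gradient InnerProductSpace

section Smooth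

theorem norm_image_add_sub_image_sub_fderiv_le {E G : Type*}
    [NormedAddCommGroup E] [NormedSpace ℝ E] [NormedAddCommGroup G] [NormedSpace ℝ G]
    {f : E → G} {L : ℝ} {x : E} (hf : Differentiable ℝ f)
    (hlip : ∀ y, ‖fderiv ℝ f y - fderiv ℝ f x‖ ≤ L * ‖y - x‖) (v : E) :
    ‖f (x + v) - f x - fderiv ℝ f x v‖ ≤ L / 2 * ‖v‖ ^ 2 := by
  have hderiv (s : ℝ) : HasDerivAt (fun s : ℝ ↦ f (x + s • v) - f x - s • fderiv ℝ f x v)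
      ((fderiv ℝ f (x + s • v) - fderiv ℝ f x) v) s := by
    have hline : HasDerivAt (fun s : ℝ ↦ x + s • v) v s := by
      simpa using ((hasDerivAt_id s).smul_const v).const_add x
    have hlin : HasDerivAt (fun s : ℝ ↦ s • fderiv ℝ f x v) (fderiv ℝ f x v) s := by
      simpa using (hasDerivAt_id s).smul_const (fderiv ℝ f x v)
    exact (((hf _).hasFDerivAt.comp_hasDerivAt s hline).sub_const (f x)).sub hlin
  have hquad (s : ℝ) : HasDerivAt (fun s : ℝ ↦ L / 2 * ‖v‖ ^ 2 * s ^ 2) (L * ‖v‖ ^ 2 * s) s :=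
    ((hasDerivAt_pow 2 s).const_mul (L / 2 * ‖v‖ ^ 2)).congr_deriv (by norm_num; ring)
  have hbound (s : ℝ) (hs : s ∈ Set.Ico (0 : ℝ) 1) :
      ‖(fderiv ℝ f (x + s • v) - fderiv ℝ f x) v‖ ≤ L * ‖v‖ ^ 2 * s :=
    calc ‖(fderiv ℝ f (x + s • v) - fderiv ℝ f x) v‖
        ≤ ‖fderiv ℝ f (x + s • v) - fderiv ℝ f x‖ * ‖v‖ := ContinuousLinearMap.le_opNorm _ _
      _ ≤ L * ‖x + s • v - x‖ * ‖v‖ := by gcongr; exact hlip _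
      _ = L * ‖v‖ ^ 2 * s := by
        rw [add_sub_cancel_left, norm_smul, Real.norm_of_nonneg hs.1]
        ring
  simpa using image_norm_le_of_norm_deriv_right_le_deriv_boundary
    (fun s _ ↦ (hderiv s).continuousAt.continuousWithinAt)
    (fun s _ ↦ (hderiv s).hasDerivWithinAt) (by simp) hquad hbound
    (Set.right_mem_Icc.2 zero_le_one)

variable {E : Type*} [NormedAddCommGroup E] [InnerProductSpace ℝ E] [CompleteSpace E]
  {Φ : E → ℝ} {L : ℝ}

theorem image_add_le_of_lipschitz_gradient {x : E} (hΦ : Differentiable ℝ Φ)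
    (hlip : ∀ y, ‖∇ Φ y - ∇ Φ x‖ ≤ L * ‖y - x‖) (v : E) :
    Φ (x + v) ≤ Φ x + ⟪∇ Φ x, v⟫_ℝ + L / 2 * ‖v‖ ^ 2 := by
  have hfderiv (y : E) : ‖fderiv ℝ Φ y - fderiv ℝ Φ x‖ ≤ L * ‖y - x‖ := by
    rw [← toDual_gradient, ← toDual_gradient, ← map_sub, LinearIsometryEquiv.norm_map]
    exact hlip y
  have htaylor := (le_abs_self _).trans (norm_image_add_sub_image_sub_fderiv_le hΦ hfderiv v)
  rw [← toDual_gradient, InnerProductSpace.toDual_apply_apply] at htaylor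
  linarith

theorem image_sub_smul_le_of_lipschitz_gradient {x : E} (hΦ : Differentiable ℝ Φ)
    (hlip : ∀ y, ‖∇ Φ y - ∇ Φ x‖ ≤ L * ‖y - x‖) (η : ℝ) (v : E) :
    Φ (x - η • v) ≤ Φ x - η / 2 * ‖∇ Φ x‖ ^ 2 - η / 2 * (1 - L * η) * ‖v‖ ^ 2
      + η / 2 * ‖v - ∇ Φ x‖ ^ 2 := by
  have hdescent := image_add_le_of_lipschitz_gradient hΦ hlip (-(η • v))
  have hnorm : ‖η • v‖ ^ 2 = η ^ 2 * ‖v‖ ^ 2 := by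
    rw [norm_smul, mul_pow, Real.norm_eq_abs, sq_abs]
  rw [← sub_eq_add_neg, inner_neg_right, real_inner_smul_right, norm_neg, hnorm] at hdescent
  rw [norm_sub_sq_real v, real_inner_comm (∇ Φ x) v]
  linarith

end Smooth

section Windows

open Finset

theorem sum_range_sum_Ico_le_nsmul {M : Type*}
    [AddCommMonoid M] [PartialOrder M] [IsOrderedAddMonoid M]
    {a : ℕ → M} (ha : ∀ s, 0 ≤ a s) {b : ℕ → ℕ} {q : ℕ} (hb : ∀ t, t ≤ b t + q) (T : ℕ) :
    ∑ t ∈ range T, ∑ s ∈ Ico (b t) t, a s ≤ q • ∑ s ∈ range T, a s := by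
  have hcard (s : ℕ) : #{t ∈ range T | b t ≤ s ∧ s < t} ≤ q := by
    have hsub : {t ∈ range T | b t ≤ s ∧ s < t} ⊆ Ioc s (s + q) := by
      intro t ht
      have := hb t
      simp only [mem_filter, mem_Ioc] at ht ⊢
      omega
    simpa using card_le_card hsub
  calc ∑ t ∈ range T, ∑ s ∈ Ico (b t) t, a s
      = ∑ s ∈ range T, ∑ t ∈ range T with b t ≤ s ∧ s < t, a s :=
        sum_comm' fun t s ↦ by
          simp only [mem_range, mem_Ico, mem_filter]
          omega
    _ = ∑ s ∈ range T, #{t ∈ range T | b t ≤ s ∧ s < t} • a s := by simp only [sum_const]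
    _ ≤ ∑ s ∈ range T, q • a s :=
        sum_le_sum fun s _ ↦ nsmul_le_nsmul_left (ha s) (hcard s)
    _ = q • ∑ s ∈ range T, a s := sum_nsmul _ _ _

theorem sum_range_le_of_le_add_sum_Ico {a e : ℕ → ℝ} {b : ℕ → ℕ} {ω c : ℝ} {q T : ℕ}
    (ha : ∀ s, 0 ≤ a s) (hc : 0 ≤ c) (hb : ∀ t, t ≤ b t + q)
    (he : ∀ t < T, e t ≤ ω + c * ∑ s ∈ Ico (b t) t, a s) :
    ∑ t ∈ range T, e t ≤ T * ω + c * q * ∑ s ∈ range T, a s :=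
  calc ∑ t ∈ range T, e t
      ≤ ∑ t ∈ range T, (ω + c * ∑ s ∈ Ico (b t) t, a s) :=
        sum_le_sum fun t ht ↦ he t (mem_range.1 ht)
    _ = T * ω + c * ∑ t ∈ range T, ∑ s ∈ Ico (b t) t, a s := by
        rw [sum_add_distrib, ← mul_sum, sum_const, card_range, nsmul_eq_mul]
    _ ≤ T * ω + c * (q • ∑ s ∈ range T, a s) := by
        gcongr
        exact sum_range_sum_Ico_le_nsmul ha hb T
    _ = T * ω + c * q * ∑ s ∈ range T, a s := by rw [nsmul_eq_mul, mul_assoc]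

end Windows

section InexactGradientDescent

open Finset

variable {E : Type*} [NormedAddCommGroup E] [InnerProductSpace ℝ E] [CompleteSpace E]
  {Φ : E → ℝ} {L η : ℝ} {x F : ℕ → E} {T : ℕ}

theorem sum_norm_sq_gradient_add_sum_norm_sq_le (hΦ : Differentiable ℝ Φ)
    (hlip : ∀ y y', ‖∇ Φ y - ∇ Φ y'‖ ≤ L * ‖y - y'‖)
    (hupd : ∀ t < T, x (t + 1) = x t - η • F t) :
    η * ∑ t ∈ range T, ‖∇ Φ (x t)‖ ^ 2 + η * (1 - L * η) * ∑ t ∈ range T, ‖F t‖ ^ 2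
      ≤ 2 * (Φ (x 0) - Φ (x T)) + η * ∑ t ∈ range T, ‖F t - ∇ Φ (x t)‖ ^ 2 := by
  have hstep (t : ℕ) (ht : t ∈ range T) :
      η * ‖∇ Φ (x t)‖ ^ 2 + η * (1 - L * η) * ‖F t‖ ^ 2
        ≤ 2 * (Φ (x t) - Φ (x (t + 1))) + η * ‖F t - ∇ Φ (x t)‖ ^ 2 := by
    rw [hupd t (mem_range.1 ht)]
    linarith [image_sub_smul_le_of_lipschitz_gradient hΦ (hlip · (x t)) η (F t)]
  simpa only [sum_add_distrib, ← mul_sum, sum_range_sub'] using sum_le_sum hstep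

theorem sum_norm_sq_gradient_le_of_error_le_sum_Ico {b : ℕ → ℕ} {ω c : ℝ} {q : ℕ}
    (hΦ : Differentiable ℝ Φ) (hlip : ∀ y y', ‖∇ Φ y - ∇ Φ y'‖ ≤ L * ‖y - y'‖)
    (hupd : ∀ t < T, x (t + 1) = x t - η • F t) (hb : ∀ t, t ≤ b t + q)
    (herr : ∀ t < T, ‖F t - ∇ Φ (x t)‖ ^ 2 ≤ ω + c * ∑ s ∈ Ico (b t) t, ‖F s‖ ^ 2)
    (hη : 0 ≤ η) (hc : 0 ≤ c) (hstep : c * q + L * η ≤ 1) :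
    η * ∑ t ∈ range T, ‖∇ Φ (x t)‖ ^ 2 ≤ 2 * (Φ (x 0) - Φ (x T)) + η * (T * ω) := by
  have hdecrease := sum_norm_sq_gradient_add_sum_norm_sq_le hΦ hlip hupd
  have herror : η * ∑ t ∈ range T, ‖F t - ∇ Φ (x t)‖ ^ 2
      ≤ η * (T * ω + c * q * ∑ t ∈ range T, ‖F t‖ ^ 2) :=
    mul_le_mul_of_nonneg_left
      (sum_range_le_of_le_add_sum_Ico (fun _ ↦ sq_nonneg _) hc hb herr) hη
  have habsorb : η * (c * q) * ∑ t ∈ range T, ‖F t‖ ^ 2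
      ≤ η * (1 - L * η) * ∑ t ∈ range T, ‖F t‖ ^ 2 := by
    gcongr
    linarith
  linarith

end InexactGradientDescent

theorem one_div_max_sqrt_sq_mul_le_one {K : ℝ} (hK : 0 < K) (a : ℝ) :
    (1 / max √K a) ^ 2 * K ≤ 1 := by
  have hmax : 0 < max √K a := lt_max_of_lt_left (Real.sqrt_pos.2 hK)
  rw [div_pow, one_pow, one_div, inv_mul_le_iff₀ (by positivity), mul_one]
  exact (Real.sqrt_le_left hmax.le).1 (le_max_left _ _)

theorem sarah_compositional_online_convergence_general {E : Type*}
    [NormedAddCommGroup E] [InnerProductSpace ℝ E] [CompleteSpace E]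
    {LΦ η Φstar So ω ε : ℝ} {q T : ℕ} (hq : 1 ≤ q) (hT : 1 ≤ T)
    (hSo : 0 < So) (hε : 0 < ε) (hωε : ω ≤ ε ^ 2)
    (hη : η = 1 / max √(6 * So * q) (2 * LΦ))
    {Φ : E → ℝ} (hΦ : Differentiable ℝ Φ)
    (hlip : ∀ x x', ‖∇ Φ x - ∇ Φ x'‖ ≤ LΦ * ‖x - x'‖) (hbound : ∀ x, Φstar ≤ Φ x)
    {x F : ℕ → E} (hupd : ∀ t < T, x (t + 1) = x t - η • F t)
    (herr : ∀ t < T, ‖F t - ∇ Φ (x t)‖ ^ 2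
      ≤ ω + 3 * So * η ^ 2 * ∑ s ∈ Finset.Ico (t / q * q) t, ‖F s‖ ^ 2)
    (hTlarge : 2 * (Φ (x 0) - Φstar) / ε ^ 2 * max √(6 * So * q) (2 * LΦ) ≤ T) :
    (1 / (T : ℝ)) * ∑ t ∈ Finset.range T, ‖∇ Φ (x t)‖ ^ 2 ≤ 2 * ε ^ 2 := by
  have hK : 0 < 6 * So * q := by positivity
  have hmax : 0 < max √(6 * So * q) (2 * LΦ) := lt_max_of_lt_left (Real.sqrt_pos.2 hK)
  have hη_pos : 0 < η := hη ▸ one_div_pos.2 hmax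
  have hwindow : η ^ 2 * (6 * So * q) ≤ 1 := hη ▸ one_div_max_sqrt_sq_mul_le_one hK _
  have hsmooth : 2 * LΦ * η ≤ 1 := by
    rw [hη, mul_one_div]
    exact div_le_one_of_le₀ (le_max_right _ _) hmax.le
  have hrestart (t : ℕ) : t ≤ t / q * q + q := (Nat.lt_div_mul_add hq).le
  have hsum := sum_norm_sq_gradient_le_of_error_le_sum_Ico hΦ hlip hupd hrestart herr hη_pos.le
    (by positivity) (by linarith)
  have hgap : 2 * (Φ (x 0) - Φstar) ≤ η * (T * ε ^ 2) := by
    rw [div_mul_eq_mul_div, div_le_iff₀ (by positivity)] at hTlarge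
    rwa [hη, one_div_mul_eq_div, le_div_iff₀ hmax]
  have hnoise : η * (T * ω) ≤ η * (T * ε ^ 2) := by gcongr
  rw [one_div, inv_mul_le_iff₀ (by positivity)]
  refine le_of_mul_le_mul_left ?_ hη_pos
  linarith [hbound (x T)]

/-- Online-case convergence theorem (deterministic per-trajectory form): with accumulated
estimation error `ω ≤ ε²`, stepsize `η = 1/max(√(6 S_o q), 2 L_Φ)` and
`T ≥ (2(Φ(x_0) − Φ*)/ε²)·max(√(6 S_o q), 2 L_Φ)`, the average squared gradient norm is
at most `2ε²`. -/
theorem sarah_compositional_online_convergence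
    (d : ℕ) (LΦ η Φstar So ω ε : ℝ) (q T : ℕ) (hq : 1 ≤ q) (hT : 1 ≤ T)
    (hLΦ : 0 ≤ LΦ) (hSo : 0 < So) (hε : 0 < ε) (hω : 0 ≤ ω) (hωε : ω ≤ ε ^ 2)
    (hη : η = 1 / max (Real.sqrt (6 * So * (q : ℝ))) (2 * LΦ))
    (Φ : EuclideanSpace ℝ (Fin d) → ℝ) (hΦ : Differentiable ℝ Φ)
    (hlip : ∀ x x', ‖gradient Φ x - gradient Φ x'‖ ≤ LΦ * ‖x - x'‖)
    (hbound : ∀ x, Φstar ≤ Φ x)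
    (x F : ℕ → EuclideanSpace ℝ (Fin d))
    (hupd : ∀ t < T, x (t + 1) = x t - η • F t)
    (herr : ∀ t < T, ‖F t - gradient Φ (x t)‖ ^ 2
        ≤ ω + 3 * So * η ^ 2 * ∑ s ∈ Finset.Ico (t / q * q) t, ‖F s‖ ^ 2)
    (hTlarge : 2 * (Φ (x 0) - Φstar) / ε ^ 2
        * max (Real.sqrt (6 * So * (q : ℝ))) (2 * LΦ) ≤ (T : ℝ)) :
    (1 / (T : ℝ)) * ∑ t ∈ Finset.range T, ‖gradient Φ (x t)‖ ^ 2 ≤ 2 * ε ^ 2 :=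
  sarah_compositional_online_convergence_general hq hT hSo hε hωε hη hΦ hlip hbound hupd herr
    hTlarge
end
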